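/- Assume 0 < τ, σ_min ≤ τ < (σ_min + σ_min,2)/2, and δ < σ_min,2 − τ, and let r ∈ ℝ^{M+N} satisfy Π̃ r = r. Set j₀ = min{1, M−N}. Then for every j ≥ j₀ there exists w ∈ K_j(B̃₁, r) such that ‖B̃₁ w + r‖ ≤ 2 · ((σ_max + δ)/τ)^{j₀} · (1 − 2/(1 + √(((σ_max + δ)² − τ²)/((σ_min,2 − δ)² − τ²))))^{⌊(j−j₀)/2⌋} · ‖r‖, where ⌊·⌋ denotes the integer part. -/

import Mathlib

open Matrix

noncomputable def vnorm {ι : Type*} [Fintype ι] (x : ι → ℝ) : ℝ :=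
  Real.sqrt (∑ i, x i ^ 2)

noncomputable def specNorm {ι κ : Type*} [Fintype ι] [Fintype κ] [DecidableEq κ]
    (A : Matrix ι κ ℝ) : ℝ :=
  ‖LinearMap.toContinuousLinearMap (Matrix.toEuclideanLin A)‖

noncomputable def Krylov {ι : Type*} [Fintype ι] [DecidableEq ι]
    (B : Matrix ι ι ℝ) (r : ι → ℝ) (j : ℕ) : Submodule ℝ (ι → ℝ) :=
  Submodule.span ℝ {x | ∃ i < j, x = (B ^ i) *ᵥ r}


/-!
If `x = (f, g)` is an eigenvector of `Π̃ B Π̃` in the range of `Π̃`, with eigenvalue `μ`, then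
`(f, g)` is a singular pair with singular value `μ + τ` of the deflated matrix
`C = (I - ũ₁ũ₁ᵀ) A (I - ṽ₁ṽ₁ᵀ)`. Inexact deflation perturbs the singular values `σ₂, …, σ_N` by at
most `δ`, so `|μ + τ|` lies in `[σ_min,2 - δ, σ_max + δ]`, except that `μ = -τ` occurs when `M > N`.
On the interval, `(μ + τ)² - τ²` is positive, and a Chebyshev polynomial in this quadratic is a
MINRES residual polynomial with the asserted decay; the exceptional eigenvalue is annihilated at
the price of the factor `1 + μ / τ`.
-/

section ChebyshevBound

open Polynomial

/-- The Chebyshev convergence factor `(√κ - 1) / (√κ + 1)` of a problem with condition number `κ`,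
in the form in which it enters the MINRES bound. -/
noncomputable def chebyshevRate (κ : ℝ) : ℝ :=
  1 - 2 / (1 + √κ)

theorem chebyshevRate_one : chebyshevRate 1 = 0 := by
  norm_num [chebyshevRate]

theorem pow_div_two_le_eval_chebyshev_T {w : ℝ} (hw : 0 < w) (k : ℕ) :
    w ^ k / 2 ≤ (Chebyshev.T ℝ k).eval ((w + w⁻¹) / 2) := by
  rw [← Real.cosh_log hw, Chebyshev.T_real_cosh, Int.cast_natCast, Real.cosh_eq, Real.exp_nat_mul,
    Real.exp_log hw]
  gcongr
  exact le_add_of_nonneg_right (Real.exp_pos _).le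

theorem add_inv_chebyshevRate_div {α β : ℝ} (hα : 0 < α) (hαβ : α < β) :
    0 < chebyshevRate (β / α) ∧
      ((chebyshevRate (β / α))⁻¹ + chebyshevRate (β / α)) / 2 = (β + α) / (β - α) := by
  have hsα : 0 < √α := Real.sqrt_pos.2 hα
  have hlt : √α < √β := Real.sqrt_lt_sqrt hα.le hαβ
  have hrate : chebyshevRate (β / α) = (√β - √α) / (√β + √α) := by
    rw [chebyshevRate, Real.sqrt_div' _ hα.le]
    field_simp
    ring
  have hsub : 0 < √β - √α := sub_pos.2 hlt
  have hadd : 0 < √β + √α := by linarith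
  refine ⟨hrate ▸ div_pos hsub hadd, ?_⟩
  have hdiff : β - α = (√β - √α) * (√β + √α) := by
    linear_combination -(Real.sq_sqrt (hα.le.trans hαβ.le)) + Real.sq_sqrt hα.le
  have hsum : β + α = √β ^ 2 + √α ^ 2 := by
    rw [Real.sq_sqrt (hα.le.trans hαβ.le), Real.sq_sqrt hα.le]
  rw [hrate, hdiff, hsum]
  field_simp
  ring

theorem exists_polynomial_abs_eval_le_chebyshevRate {α β : ℝ} (hα : 0 < α) (hαβ : α ≤ β) (k : ℕ) :
    ∃ p : ℝ[X], p.natDegree ≤ k ∧ p.eval 0 = 1 ∧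
      ∀ y ∈ Set.Icc α β, |p.eval y| ≤ 2 * chebyshevRate (β / α) ^ k := by
  rcases hαβ.eq_or_lt with rfl | hlt
  · refine ⟨(1 - C α⁻¹ * X) ^ k, ?_, by simp, fun y hy => ?_⟩
    · simpa using natDegree_pow_le_of_le k
        (show (1 - C α⁻¹ * X : ℝ[X]).natDegree ≤ 1 by compute_degree)
    · obtain rfl : y = α := le_antisymm hy.2 hy.1
      rw [div_self hα.ne', chebyshevRate_one]
      rcases k.eq_zero_or_pos with rfl | hk
      · norm_num
      · simp [hα.ne', hk.ne']
  · obtain ⟨hρ, hcenter⟩ := add_inv_chebyshevRate_div hα hlt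
    set ρ := chebyshevRate (β / α)
    have hvalue := pow_div_two_le_eval_chebyshev_T (inv_pos.2 hρ) k
    rw [inv_inv, hcenter] at hvalue
    set t := (Chebyshev.T ℝ k).eval ((β + α) / (β - α))
    have ht : 0 < t := (by positivity : 0 < ρ⁻¹ ^ k / 2).trans_le hvalue
    refine ⟨C t⁻¹ * (Chebyshev.T ℝ k).comp (C ((β + α) / (β - α)) - C (2 / (β - α)) * X),
      ?_, ?_, fun y hy => ?_⟩
    · refine (natDegree_C_mul_le _ _).trans (natDegree_comp_le.trans ?_)
      rw [Chebyshev.natDegree_T, Int.natAbs_natCast]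
      exact mul_le_of_le_one_right k.zero_le (by compute_degree)
    · simpa using inv_mul_cancel₀ ht.ne'
    · have hargument : |(β + α) / (β - α) - 2 / (β - α) * y| ≤ 1 := by
        have hsub : 0 < β - α := sub_pos.2 hlt
        rw [div_mul_eq_mul_div, ← sub_div, abs_div, abs_of_pos hsub, div_le_one hsub, abs_le]
        constructor <;> linarith [hy.1, hy.2]
      simp only [eval_mul, eval_C, eval_comp, eval_sub, eval_X]
      rw [abs_mul, abs_of_pos (inv_pos.2 ht)]
      calc t⁻¹ * |(Chebyshev.T ℝ k).eval ((β + α) / (β - α) - 2 / (β - α) * y)|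
          ≤ (ρ⁻¹ ^ k / 2)⁻¹ * 1 := by
            gcongr
            exact Chebyshev.abs_eval_T_real_le_one k hargument
        _ = 2 * ρ ^ k := by rw [inv_pow, mul_one, inv_div, div_inv_eq_mul]

theorem exists_polynomial_abs_eval_le_of_shifted_sq {a b τ : ℝ} (hτ : 0 ≤ τ) (ha : τ < a)
    (hab : a ≤ b) (k : ℕ) :
    ∃ p : ℝ[X], p.natDegree ≤ 2 * k ∧ p.eval 0 = 1 ∧ ∀ x, |x + τ| ∈ Set.Icc a b →
      |p.eval x| ≤ 2 * chebyshevRate ((b ^ 2 - τ ^ 2) / (a ^ 2 - τ ^ 2)) ^ k := by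
  obtain ⟨q, hq_deg, hq_zero, hq_le⟩ :=
    exists_polynomial_abs_eval_le_chebyshevRate (α := a ^ 2 - τ ^ 2) (β := b ^ 2 - τ ^ 2)
      (by nlinarith) (by nlinarith) k
  refine ⟨q.comp ((X + C τ) ^ 2 - C (τ ^ 2)), ?_, by simpa using hq_zero, fun x hx => ?_⟩
  · refine natDegree_comp_le.trans ?_
    rw [mul_comm]
    exact Nat.mul_le_mul (by compute_degree) hq_deg
  · have hlower : a ^ 2 ≤ (x + τ) ^ 2 := by
      rw [← sq_abs (x + τ)]
      exact pow_le_pow_left₀ (hτ.trans ha.le) hx.1 2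
    have hupper : (x + τ) ^ 2 ≤ b ^ 2 := by
      rw [← sq_abs (x + τ)]
      exact pow_le_pow_left₀ (abs_nonneg _) hx.2 2
    simpa using hq_le ((x + τ) ^ 2 - τ ^ 2) ⟨by linarith, by linarith⟩

theorem exists_polynomial_abs_eval_le_and_eval_neg_eq_zero {a b τ : ℝ} (hτ : 0 < τ) (ha : τ < a)
    (hab : a ≤ b) (d k : ℕ) :
    ∃ p : ℝ[X], p.natDegree ≤ 2 * k + d ∧ p.eval 0 = 1 ∧
      (∀ x, |x + τ| ∈ Set.Icc a b → |p.eval x| ≤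
        2 * (b / τ) ^ d * chebyshevRate ((b ^ 2 - τ ^ 2) / (a ^ 2 - τ ^ 2)) ^ k) ∧
      (d ≠ 0 → p.eval (-τ) = 0) := by
  obtain ⟨q, hq_deg, hq_zero, hq_le⟩ :=
    exists_polynomial_abs_eval_le_of_shifted_sq hτ.le ha hab k
  refine ⟨q * (1 + C τ⁻¹ * X) ^ d, ?_, by simp [hq_zero], fun x hx => ?_, fun hd => ?_⟩
  · refine natDegree_mul_le_of_le hq_deg ?_
    simpa using natDegree_pow_le_of_le d
      (show (1 + C τ⁻¹ * X : ℝ[X]).natDegree ≤ 1 by compute_degree)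
  · have hlinear : |1 + τ⁻¹ * x| ≤ b / τ := by
      rw [show 1 + τ⁻¹ * x = (x + τ) / τ by field_simp; ring, abs_div, abs_of_pos hτ]
      gcongr
      exact hx.2
    simp only [eval_mul, eval_pow, eval_add, eval_one, eval_C, eval_X]
    rw [abs_mul, abs_pow, mul_right_comm]
    exact mul_le_mul (hq_le x hx) (pow_le_pow_left₀ (abs_nonneg _) hlinear d) (by positivity)
      ((abs_nonneg _).trans (hq_le x hx))
  · simp [hτ.ne', hd]

end ChebyshevBound

section EuclideanNorm

variable {ι κ : Type*} [Fintype ι] [Fintype κ]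

theorem vnorm_eq_norm_toLp (x : ι → ℝ) : vnorm x = ‖WithLp.toLp 2 x‖ := by
  simp [EuclideanSpace.norm_eq, vnorm]

theorem dotProduct_eq_inner_toLp (x y : ι → ℝ) :
    x ⬝ᵥ y = inner ℝ (WithLp.toLp 2 x) (WithLp.toLp 2 y) := by
  simp [EuclideanSpace.inner_toLp_toLp, dotProduct_comm]

theorem vnorm_nonneg (x : ι → ℝ) : 0 ≤ vnorm x :=
  Real.sqrt_nonneg _

theorem vnorm_sq (x : ι → ℝ) : vnorm x ^ 2 = x ⬝ᵥ x := by
  rw [vnorm_eq_norm_toLp, dotProduct_eq_inner_toLp, real_inner_self_eq_norm_sq]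

theorem vnorm_eq_of_dotProduct_self_eq {x : ι → ℝ} {y : κ → ℝ} (h : x ⬝ᵥ x = y ⬝ᵥ y) :
    vnorm x = vnorm y := by
  rwa [← vnorm_sq, ← vnorm_sq, sq_eq_sq₀ (vnorm_nonneg x) (vnorm_nonneg y)] at h

theorem vnorm_eq_one {x : ι → ℝ} (hx : x ⬝ᵥ x = 1) : vnorm x = 1 := by
  rwa [← vnorm_sq, pow_eq_one_iff_of_nonneg (vnorm_nonneg x) two_ne_zero] at hx

theorem vnorm_zero : vnorm (0 : ι → ℝ) = 0 := by
  simp [vnorm]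

theorem norm_toLp_eq_one {x : ι → ℝ} (hx : x ⬝ᵥ x = 1) : ‖WithLp.toLp 2 x‖ = 1 := by
  rw [← vnorm_eq_norm_toLp, vnorm_eq_one hx]

theorem vnorm_pos {x : ι → ℝ} (hx : x ≠ 0) : 0 < vnorm x := by
  rw [vnorm_eq_norm_toLp, norm_pos_iff]
  exact fun h => hx ((WithLp.toLp_eq_zero 2).1 h)

theorem vnorm_smul (c : ℝ) (x : ι → ℝ) : vnorm (c • x) = |c| * vnorm x := by
  rw [vnorm_eq_norm_toLp, vnorm_eq_norm_toLp, WithLp.toLp_smul, norm_smul, Real.norm_eq_abs]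

theorem vnorm_le_vnorm {x y : ι → ℝ} (h : ∀ i, |x i| ≤ |y i|) : vnorm x ≤ vnorm y :=
  Real.sqrt_le_sqrt (Finset.sum_le_sum fun i _ => sq_le_sq.2 (h i))

theorem vnorm_mulVec_le_specNorm_mul [DecidableEq κ] (A : Matrix ι κ ℝ) (x : κ → ℝ) :
    vnorm (A *ᵥ x) ≤ specNorm A * vnorm x := by
  rw [vnorm_eq_norm_toLp, vnorm_eq_norm_toLp]
  exact (LinearMap.toContinuousLinearMap (Matrix.toEuclideanLin A)).le_opNorm (WithLp.toLp 2 x)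

theorem vnorm_mulVec_of_transpose_mul_self [DecidableEq κ] {U : Matrix ι κ ℝ} (hU : Uᵀ * U = 1)
    (x : κ → ℝ) : vnorm (U *ᵥ x) = vnorm x := by
  apply vnorm_eq_of_dotProduct_self_eq
  rw [← dotProduct_transpose_mulVec, mulVec_mulVec, hU, one_mulVec]

theorem col_dotProduct_self {ι κ : Type*} [Fintype ι] [DecidableEq κ] {U : Matrix ι κ ℝ}
    (hU : Uᵀ * U = 1) (j : κ) : U.col j ⬝ᵥ U.col j = 1 := by
  simpa [mul_apply, dotProduct] using congrFun₂ hU j j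

theorem sin_angle_toLp {u w : ι → ℝ} (hu : u ⬝ᵥ u = 1) (hw : w ⬝ᵥ w = 1) :
    Real.sin (InnerProductGeometry.angle (WithLp.toLp 2 u) (WithLp.toLp 2 w)) =
      √(1 - (u ⬝ᵥ w) ^ 2) := by
  have h := InnerProductGeometry.sin_angle_mul_norm_mul_norm (WithLp.toLp 2 u) (WithLp.toLp 2 w)
  simpa only [norm_toLp_eq_one hu, norm_toLp_eq_one hw, ← dotProduct_eq_inner_toLp, hu, hw, mul_one,
    ← sq, one_pow] using h

end EuclideanNorm

section Minres

open Polynomial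

variable {ι : Type*} [Fintype ι] [DecidableEq ι]

theorem exists_mem_Krylov_mulVec_add_eq_aeval_mulVec (B : Matrix ι ι ℝ) {p : ℝ[X]} {j : ℕ}
    (hdeg : p.natDegree ≤ j) (hzero : p.eval 0 = 1) (r : ι → ℝ) :
    ∃ w ∈ Krylov B r j, B *ᵥ w + r = aeval B p *ᵥ r := by
  refine ⟨aeval B p.divX *ᵥ r, ?_, ?_⟩
  · rw [aeval_eq_sum_range' (n := j + 1) (by rw [natDegree_divX_eq_natDegree_tsub_one]; omega),
      sum_mulVec]
    refine Submodule.sum_mem _ fun i _ => ?_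
    rw [smul_mulVec]
    by_cases hi : i < j
    · exact Submodule.smul_mem _ _ (Submodule.subset_span ⟨i, hi, rfl⟩)
    · rw [coeff_divX, coeff_eq_zero_of_natDegree_lt (by omega), zero_smul]
      exact Submodule.zero_mem _
  · conv_rhs => rw [← divX_mul_X_add p, coeff_zero_eq_eval_zero, hzero, mul_comm]
    simp [add_mulVec]

theorem aeval_mulVec_of_mulVec_eq_smul {B : Matrix ι ι ℝ} {x : ι → ℝ} {μ : ℝ}
    (hx : B *ᵥ x = μ • x) (p : ℝ[X]) : aeval B p *ᵥ x = p.eval μ • x := by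
  have h := Module.End.aeval_apply_of_mem_apply_eq_smul (f := toLinAlgEquiv' B) (p := p) hx
  rwa [aeval_algHom_apply toLinAlgEquiv' B p, toLinAlgEquiv'_apply] at h

theorem isSymm_aeval {B : Matrix ι ι ℝ} (hB : B.IsSymm) (p : ℝ[X]) : (aeval B p).IsSymm := by
  induction p using Polynomial.induction_on' with
  | add p q hp hq => simpa only [map_add] using hp.add hq
  | monomial k c => simpa only [aeval_monomial, ← Algebra.smul_def] using (hB.pow k).smul c

theorem vnorm_aeval_mulVec_le {B : Matrix ι ι ℝ} (hB : B.IsSymm) (p : ℝ[X]) (r : ι → ℝ) {K : ℝ}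
    (hK : 0 ≤ K)
    (hp : ∀ (μ : ℝ) (x : ι → ℝ), B *ᵥ x = μ • x → x ⬝ᵥ r ≠ 0 → |p.eval μ| ≤ K) :
    vnorm (aeval B p *ᵥ r) ≤ K * vnorm r := by
  have hH : B.IsHermitian := hB
  set e := hH.eigenvectorBasis
  have hparseval (x : ι → ℝ) : vnorm x ^ 2 = ∑ i, ((e i).ofLp ⬝ᵥ x) ^ 2 := by
    simp only [vnorm_eq_norm_toLp, dotProduct_eq_inner_toLp, WithLp.toLp_ofLp,
      e.sum_sq_inner_right]
  apply le_of_sq_le_sq _ (mul_nonneg hK (vnorm_nonneg r))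
  rw [mul_pow, hparseval, hparseval, Finset.mul_sum]
  refine Finset.sum_le_sum fun i _ => ?_
  have heigen : B *ᵥ (e i).ofLp = hH.eigenvalues i • (e i).ofLp := hH.mulVec_eigenvectorBasis i
  have hcoeff : (e i).ofLp ⬝ᵥ (aeval B p *ᵥ r) =
      p.eval (hH.eigenvalues i) * ((e i).ofLp ⬝ᵥ r) := by
    rw [← (isSymm_aeval hB p).eq, dotProduct_transpose_mulVec,
      aeval_mulVec_of_mulVec_eq_smul heigen, dotProduct_smul, smul_eq_mul, dotProduct_comm r]
  rw [hcoeff, mul_pow]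
  rcases eq_or_ne ((e i).ofLp ⬝ᵥ r) 0 with hzero | hne
  · simp [hzero]
  · have hle := hp _ _ heigen hne
    rw [← sq_abs (p.eval _)]
    gcongr

theorem exists_mem_Krylov_vnorm_mulVec_add_le {B P : Matrix ι ι ℝ} (hB : B.IsSymm)
    (hP : P.IsSymm) (hPP : P * P = P) (hPB : Commute P B) {r : ι → ℝ} (hr : P *ᵥ r = r)
    {p : ℝ[X]} {j : ℕ} (hdeg : p.natDegree ≤ j) (hzero : p.eval 0 = 1) {K : ℝ} (hK : 0 ≤ K)
    (hp : ∀ (μ : ℝ) (x : ι → ℝ), x ≠ 0 → P *ᵥ x = x → B *ᵥ x = μ • x → |p.eval μ| ≤ K) :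
    ∃ w ∈ Krylov B r j, vnorm (B *ᵥ w + r) ≤ K * vnorm r := by
  obtain ⟨w, hw, hres⟩ := exists_mem_Krylov_mulVec_add_eq_aeval_mulVec B hdeg hzero r
  refine ⟨w, hw, hres ▸ vnorm_aeval_mulVec_le hB p r hK fun μ x hx hxr => ?_⟩
  refine hp μ (P *ᵥ x) (fun hPx => hxr ?_) ?_ ?_
  · rw [← hr, ← hP.eq, dotProduct_transpose_mulVec, hPx, dotProduct_zero]
  · rw [mulVec_mulVec, hPP]
  · rw [mulVec_mulVec, ← hPB.eq, ← mulVec_mulVec, hx, mulVec_smul]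

end Minres

section InexactDeflation

open InnerProductGeometry

variable {E F : Type*} [NormedAddCommGroup E] [InnerProductSpace ℝ E]
  [NormedAddCommGroup F] [InnerProductSpace ℝ F]

theorem norm_sub_inner_smul_sq {u : E} (hu : ‖u‖ = 1) (x : E) :
    ‖x - inner ℝ u x • u‖ ^ 2 = ‖x‖ ^ 2 - inner ℝ u x ^ 2 := by
  rw [norm_sub_sq_real, norm_smul, inner_smul_right, hu, Real.norm_eq_abs, mul_one, sq_abs,
    real_inner_comm]
  ring

theorem norm_sub_inner_smul {u : E} (hu : ‖u‖ = 1) (x : E) :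
    ‖x - inner ℝ u x • u‖ = Real.sin (angle u x) * ‖x‖ := by
  refine (sq_eq_sq₀ (norm_nonneg _)
    (mul_nonneg (sin_angle_nonneg u x) (norm_nonneg x))).1 ?_
  rw [norm_sub_inner_smul_sq hu, mul_pow, Real.sin_sq, ← cos_angle_mul_norm_mul_norm u x, hu]
  ring

theorem abs_inner_le_sin_angle_mul_norm {u w z : E} (hu : ‖u‖ = 1) (hw : ‖w‖ = 1)
    (hz : inner ℝ w z = 0) : |inner ℝ u z| ≤ Real.sin (angle u w) * ‖z‖ := by
  have hshift : inner ℝ u z = inner ℝ (u - inner ℝ w u • w) z := by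
    rw [inner_sub_left, inner_smul_left, hz, mul_zero, sub_zero]
  calc |inner ℝ u z| ≤ ‖u - inner ℝ w u • w‖ * ‖z‖ := hshift ▸ abs_real_inner_le_norm _ _
    _ = Real.sin (angle u w) * ‖z‖ := by
      rw [norm_sub_inner_smul hw, hu, mul_one, angle_comm]

theorem one_sub_sin_angle_sq_mul_norm_le {u w z : E} (hu : ‖u‖ = 1) (hw : ‖w‖ = 1)
    (hz : inner ℝ w z = 0) :
    (1 - Real.sin (angle u w) ^ 2) * ‖z‖ ≤ ‖z - inner ℝ u z • u‖ := by
  set s := Real.sin (angle u w)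
  have hs : s ^ 2 ≤ 1 := Real.sin_sq_le_one _
  have hinner : inner ℝ u z ^ 2 ≤ (s * ‖z‖) ^ 2 :=
    sq_le_sq' (abs_le.1 (abs_inner_le_sin_angle_mul_norm hu hw hz)).1
      (abs_le.1 (abs_inner_le_sin_angle_mul_norm hu hw hz)).2
  apply le_of_sq_le_sq _ (norm_nonneg _)
  calc ((1 - s ^ 2) * ‖z‖) ^ 2 = (1 - s ^ 2) ^ 2 * ‖z‖ ^ 2 := mul_pow _ _ _
    _ ≤ (1 - s ^ 2) * ‖z‖ ^ 2 := by
      gcongr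
      exact pow_le_of_le_one (by linarith) (by linarith [sq_nonneg s]) two_ne_zero
    _ ≤ ‖z‖ ^ 2 - inner ℝ u z ^ 2 := by linarith
    _ = ‖z - inner ℝ u z • u‖ ^ 2 := (norm_sub_inner_smul_sq hu z).symm

theorem sub_mul_add_sq_le_mul_one_sub_sq_sub {s t a p q : ℝ} (hs : 0 ≤ s) (hta : t ≤ a)
    (hsa : s ≤ a) (hp : 0 ≤ p) (hq : 0 ≤ q) :
    s - a * (p + q) ^ 2 ≤ (1 - p ^ 2) * (s * (1 - q ^ 2)) - q * t * p := by
  have hsquares : s * (p ^ 2 + q ^ 2) ≤ a * (p ^ 2 + q ^ 2) := by gcongr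
  have hcross : t * (p * q) ≤ a * (p * q) := by gcongr
  have hquartic : 0 ≤ s * (p ^ 2 * q ^ 2) := by positivity
  have hspare : 0 ≤ a * (p * q) := mul_nonneg (hs.trans hsa) (mul_nonneg hp hq)
  linarith

theorem mul_norm_le_norm_sub_inner_smul_of_singular_pair (T : E →ₗ[ℝ] F) {v v' x : E} {u u' : F}
    (hv : ‖v‖ = 1) (hv' : ‖v'‖ = 1) (hu : ‖u‖ = 1) (hu' : ‖u'‖ = 1) {σ₁ s a : ℝ} (hσ₁ : 0 ≤ σ₁)
    (hs : 0 ≤ s) (hσ₁a : σ₁ ≤ a) (hsa : s ≤ a) (hTv : T v = σ₁ • u)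
    (horth : ∀ y, inner ℝ v y = 0 → inner ℝ u (T y) = 0)
    (hlow : ∀ y, inner ℝ v y = 0 → s * ‖y‖ ≤ ‖T y‖) (hx : inner ℝ v' x = 0) :
    (s - a * (Real.sin (angle u u') + Real.sin (angle v v')) ^ 2) * ‖x‖ ≤
      ‖T x - inner ℝ u' (T x) • u'‖ := by
  set φ := angle u u'
  set ψ := angle v v'
  have hsinφ : 0 ≤ Real.sin φ := sin_angle_nonneg u u'
  have hsinψ : 0 ≤ Real.sin ψ := sin_angle_nonneg v v'
  have hcosφ : 0 ≤ 1 - Real.sin φ ^ 2 := sub_nonneg.2 (Real.sin_sq_le_one φ)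
  set c := inner ℝ v x
  set y := x - c • v
  have hvy : inner ℝ v y = 0 := by
    rw [inner_sub_right, inner_smul_right, real_inner_self_eq_norm_sq, hv]
    ring
  have hc : |c| ≤ Real.sin ψ * ‖x‖ := abs_inner_le_sin_angle_mul_norm hv hv' hx
  -- Of `x = y + c v`, the matrix stretches `y` by at least `s`. The small component `c v` becomes
  -- `c σ₁ u`, of which the deflation of `u'` leaves only the fraction `sin φ`.
  have hmain : (1 - Real.sin φ ^ 2) * (s * ((1 - Real.sin ψ ^ 2) * ‖x‖)) ≤
      ‖T y - inner ℝ u' (T y) • u'‖ :=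
    calc _ ≤ (1 - Real.sin φ ^ 2) * (s * ‖y‖) := by
          gcongr
          exact one_sub_sin_angle_sq_mul_norm_le hv hv' hx
      _ ≤ (1 - Real.sin φ ^ 2) * ‖T y‖ := by
          gcongr
          exact hlow y hvy
      _ ≤ _ := by
          simpa only [φ, angle_comm u u'] using
            one_sub_sin_angle_sq_mul_norm_le hu' hu (horth y hvy)
  have hleak : ‖(c * σ₁) • (u - inner ℝ u' u • u')‖ ≤ Real.sin ψ * ‖x‖ * σ₁ * Real.sin φ := by
    rw [norm_smul, norm_sub_inner_smul hu', hu, mul_one, angle_comm, Real.norm_eq_abs, abs_mul,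
      abs_of_nonneg hσ₁]
    gcongr
  have hsplit : T x - inner ℝ u' (T x) • u' =
      (T y - inner ℝ u' (T y) • u') + (c * σ₁) • (u - inner ℝ u' u • u') := by
    rw [show x = y + c • v from (sub_add_cancel x _).symm, map_add, map_smul, hTv,
      inner_add_right, inner_smul_right, inner_smul_right]
    module
  have htriangle := hsplit ▸ norm_sub_le_norm_add (T y - inner ℝ u' (T y) • u')
    ((c * σ₁) • (u - inner ℝ u' u • u'))
  have hcoeff := sub_mul_add_sq_le_mul_one_sub_sq_sub hs hσ₁a hsa hsinφ hsinψ
  linarith [mul_le_mul_of_nonneg_right hcoeff (norm_nonneg x)]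

end InexactDeflation

section Deflator

variable {ι κ : Type*}

/-- The matrix `I - u uᵀ`, which for a unit vector `u` is the orthogonal projection onto the
complement of `u`. -/
def deflator [DecidableEq ι] (u : ι → ℝ) : Matrix ι ι ℝ :=
  1 - vecMulVec u u

theorem isSymm_deflator [DecidableEq ι] (u : ι → ℝ) : (deflator u).IsSymm := by
  simp [deflator, IsSymm, transpose_vecMulVec]

variable [Fintype ι] [Fintype κ] [DecidableEq ι]

theorem deflator_mulVec (u x : ι → ℝ) : deflator u *ᵥ x = x - (u ⬝ᵥ x) • u := by
  simp [deflator, sub_mulVec, vecMulVec_mulVec]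

theorem deflator_mul_self {u : ι → ℝ} (hu : u ⬝ᵥ u = 1) : deflator u * deflator u = deflator u := by
  simp [deflator, mul_sub, sub_mul, vecMulVec_mul_vecMulVec, hu]

theorem dotProduct_eq_zero_of_deflator_mulVec_eq_self {u x : ι → ℝ} (hu : u ⬝ᵥ u = 1)
    (hx : deflator u *ᵥ x = x) : u ⬝ᵥ x = 0 := by
  rw [← hx, deflator_mulVec, dotProduct_sub, dotProduct_smul, hu, smul_eq_mul, mul_one, sub_self]

theorem vnorm_deflator_mulVec_le {u : ι → ℝ} (hu : u ⬝ᵥ u = 1) (x : ι → ℝ) :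
    vnorm (deflator u *ᵥ x) ≤ vnorm x := by
  apply le_of_sq_le_sq _ (vnorm_nonneg x)
  have hpythagoras := norm_sub_inner_smul_sq (norm_toLp_eq_one hu) (WithLp.toLp 2 x)
  rw [← dotProduct_eq_inner_toLp, ← WithLp.toLp_smul, ← WithLp.toLp_sub, ← deflator_mulVec,
    ← vnorm_eq_norm_toLp, ← vnorm_eq_norm_toLp] at hpythagoras
  linarith [sq_nonneg (u ⬝ᵥ x)]

theorem mul_vnorm_le_vnorm_deflator_mulVec_of_singular_pair {A : Matrix ι κ ℝ}
    {v v' x : κ → ℝ} {u u' : ι → ℝ} (hv : v ⬝ᵥ v = 1) (hv' : v' ⬝ᵥ v' = 1)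
    (hu : u ⬝ᵥ u = 1) (hu' : u' ⬝ᵥ u' = 1) {σ₁ s a : ℝ} (hσ₁ : 0 ≤ σ₁) (hs : 0 ≤ s)
    (hσ₁a : σ₁ ≤ a) (hsa : s ≤ a) (hAv : A *ᵥ v = σ₁ • u)
    (hAu : Aᵀ *ᵥ u = σ₁ • v) (hlow : ∀ y, v ⬝ᵥ y = 0 → s * vnorm y ≤ vnorm (A *ᵥ y))
    (hx : v' ⬝ᵥ x = 0) :
    (s - a * (√(1 - (u ⬝ᵥ u') ^ 2) + √(1 - (v ⬝ᵥ v') ^ 2)) ^ 2) * vnorm x ≤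
      vnorm (deflator u' *ᵥ (A *ᵥ x)) := by
  classical
  have h := mul_norm_le_norm_sub_inner_smul_of_singular_pair (Matrix.toEuclideanLin A)
    (norm_toLp_eq_one hv) (norm_toLp_eq_one hv') (norm_toLp_eq_one hu) (norm_toLp_eq_one hu')
    hσ₁ hs hσ₁a hsa (by rw [toLpLin_toLp, toLin'_apply, hAv, WithLp.toLp_smul])
    (fun y hy => ?_) (fun y hy => ?_) ((dotProduct_eq_inner_toLp v' x).symm.trans hx)
  · rwa [sin_angle_toLp hu hu', sin_angle_toLp hv hv', toLpLin_toLp, toLin'_apply,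
      ← dotProduct_eq_inner_toLp, ← WithLp.toLp_smul, ← WithLp.toLp_sub, ← deflator_mulVec,
      ← vnorm_eq_norm_toLp, ← vnorm_eq_norm_toLp] at h
  · obtain ⟨y, rfl⟩ := WithLp.toLp_surjective 2 y
    rw [← dotProduct_eq_inner_toLp] at hy
    rw [toLpLin_toLp, toLin'_apply, ← dotProduct_eq_inner_toLp,
      ← dotProduct_transpose_mulVec, hAu, dotProduct_smul, dotProduct_comm, hy, smul_zero]
  · obtain ⟨y, rfl⟩ := WithLp.toLp_surjective 2 y
    rw [← dotProduct_eq_inner_toLp] at hy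
    simpa only [toLpLin_toLp, toLin'_apply, ← vnorm_eq_norm_toLp] using hlow y hy

end Deflator

section SingularValueDecomposition

variable {m n : Type*} [DecidableEq m]

/-- The rectangular diagonal matrix of a singular value decomposition: column `j` has the entry
`σ j` in row `e j` and zeros elsewhere. -/
def rectDiagonal (e : n ↪ m) (σ : n → ℝ) : Matrix m n ℝ :=
  of fun i j => if i = e j then σ j else 0

theorem transpose_rectDiagonal [DecidableEq n] (e : n ≃ m) (σ : n → ℝ) :
    (rectDiagonal e.toEmbedding σ)ᵀ = rectDiagonal e.symm.toEmbedding (σ ∘ e.symm) := by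
  ext j i
  obtain ⟨k, rfl⟩ := e.surjective i
  rcases eq_or_ne j k with rfl | hjk
  · simp [rectDiagonal]
  · simp [rectDiagonal, hjk, hjk.symm]

theorem transpose_rectDiagonal_mulVec [Fintype m] (e : n ↪ m) (σ : n → ℝ) (x : m → ℝ) :
    (rectDiagonal e σ)ᵀ *ᵥ x = σ * (x ∘ e) := by
  ext j
  simp [rectDiagonal, mulVec, dotProduct]

variable [Fintype n]

theorem vnorm_rectDiagonal_mulVec [Fintype m] (e : n ↪ m) (σ y : n → ℝ) :
    vnorm (rectDiagonal e σ *ᵥ y) = vnorm (σ * y) := by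
  classical
  have happly : (rectDiagonal e σ *ᵥ y) ∘ e = σ * y := by
    ext j
    simp [rectDiagonal, mulVec, dotProduct]
  apply vnorm_eq_of_dotProduct_self_eq
  rw [← dotProduct_transpose_mulVec, transpose_rectDiagonal_mulVec, happly]
  simp only [dotProduct, Pi.mul_apply]
  exact Finset.sum_congr rfl fun j _ => by ring

variable [DecidableEq n]

theorem rectDiagonal_mulVec_single (e : n ↪ m) (σ : n → ℝ) (j : n) :
    rectDiagonal e σ *ᵥ Pi.single j 1 = σ j • Pi.single (e j) 1 := by
  ext i
  simp [rectDiagonal, Pi.single_apply]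

variable [Fintype m]

/-- `A = U Σ Vᵀ` is a full singular value decomposition in which the right singular vector
`V.col j` is paired with the left singular vector `U.col (e j)`. No order of the singular values is
imposed. -/
structure IsSVD (A : Matrix m n ℝ) (U : Matrix m m ℝ) (e : n ↪ m) (σ : n → ℝ)
    (V : Matrix n n ℝ) : Prop where
  transpose_mul_left : Uᵀ * U = 1
  transpose_mul_right : Vᵀ * V = 1
  nonneg : ∀ j, 0 ≤ σ j
  eq_mul : A = U * rectDiagonal e σ * Vᵀ

namespace IsSVD

variable {A : Matrix m n ℝ} {U : Matrix m m ℝ} {e : n ↪ m} {σ : n → ℝ} {V : Matrix n n ℝ}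

theorem transpose {e : n ≃ m} (h : IsSVD A U e.toEmbedding σ V) :
    IsSVD Aᵀ V e.symm.toEmbedding (σ ∘ e.symm) U where
  transpose_mul_left := h.transpose_mul_right
  transpose_mul_right := h.transpose_mul_left
  nonneg i := h.nonneg _
  eq_mul := by
    rw [h.eq_mul, transpose_mul, transpose_mul, transpose_transpose, transpose_rectDiagonal,
      Matrix.mul_assoc]

theorem mulVec_col (h : IsSVD A U e σ V) (j : n) : A *ᵥ V.col j = σ j • U.col (e j) := by
  rw [← mulVec_single_one, h.eq_mul, mulVec_mulVec, Matrix.mul_assoc, h.transpose_mul_right,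
    Matrix.mul_one, ← mulVec_mulVec, rectDiagonal_mulVec_single, mulVec_smul, mulVec_single_one]

theorem transpose_mulVec_col (h : IsSVD A U e σ V) (j : n) :
    Aᵀ *ᵥ U.col (e j) = σ j • V.col j := by
  have hcol : σ * (Pi.single (e j) 1 ∘ e) = σ j • Pi.single j (1 : ℝ) := by
    ext i
    rcases eq_or_ne i j with rfl | hij
    · simp
    · simp [hij]
  rw [← mulVec_single_one, h.eq_mul, transpose_mul, transpose_mul, transpose_transpose,
    mulVec_mulVec, Matrix.mul_assoc, Matrix.mul_assoc, h.transpose_mul_left, Matrix.mul_one,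
    ← mulVec_mulVec, transpose_rectDiagonal_mulVec, hcol, mulVec_smul, mulVec_single_one]

theorem vnorm_transpose_right_mulVec (h : IsSVD A U e σ V) (y : n → ℝ) :
    vnorm (Vᵀ *ᵥ y) = vnorm y :=
  vnorm_mulVec_of_transpose_mul_self
    (by rw [transpose_transpose, mul_eq_one_comm, h.transpose_mul_right]) y

theorem vnorm_mulVec (h : IsSVD A U e σ V) (y : n → ℝ) :
    vnorm (A *ᵥ y) = vnorm (σ * (Vᵀ *ᵥ y)) := by
  rw [h.eq_mul, ← mulVec_mulVec, ← mulVec_mulVec,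
    vnorm_mulVec_of_transpose_mul_self h.transpose_mul_left, vnorm_rectDiagonal_mulVec]

theorem le_specNorm (h : IsSVD A U e σ V) (j : n) : σ j ≤ specNorm A := by
  have hle := vnorm_mulVec_le_specNorm_mul A (V.col j)
  rwa [h.mulVec_col, vnorm_smul, vnorm_eq_one (col_dotProduct_self h.transpose_mul_right j),
    vnorm_eq_one (col_dotProduct_self h.transpose_mul_left (e j)), mul_one, mul_one,
    abs_of_nonneg (h.nonneg j)] at hle

theorem vnorm_mulVec_le (h : IsSVD A U e σ V) {b : ℝ} (hb : ∀ j, σ j ≤ b) (hb₀ : 0 ≤ b)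
    (y : n → ℝ) : vnorm (A *ᵥ y) ≤ b * vnorm y := by
  rw [h.vnorm_mulVec, ← h.vnorm_transpose_right_mulVec y, ← abs_of_nonneg hb₀, ← vnorm_smul]
  refine vnorm_le_vnorm fun j => ?_
  rw [Pi.mul_apply, Pi.smul_apply, smul_eq_mul, abs_mul, abs_mul]
  gcongr
  exacts [h.nonneg j, hb j]

theorem mul_vnorm_le_vnorm_mulVec (h : IsSVD A U e σ V) {k : n} {s : ℝ} (hs₀ : 0 ≤ s)
    (hs : ∀ j ≠ k, s ≤ σ j) {y : n → ℝ} (hy : V.col k ⬝ᵥ y = 0) :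
    s * vnorm y ≤ vnorm (A *ᵥ y) := by
  rw [h.vnorm_mulVec, ← h.vnorm_transpose_right_mulVec y, ← abs_of_nonneg hs₀, ← vnorm_smul]
  refine vnorm_le_vnorm fun j => ?_
  rw [Pi.mul_apply, Pi.smul_apply, smul_eq_mul, abs_mul, abs_mul]
  rcases eq_or_ne j k with rfl | hjk
  · have hzero : (Vᵀ *ᵥ y) j = 0 := hy
    simp [hzero]
  · gcongr
    exact hs j hjk

theorem mul_vnorm_le_vnorm_deflator_mulVec [Nontrivial n] (h : IsSVD A U e σ V) {k : n} {s a : ℝ}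
    (hs₀ : 0 ≤ s) (hs : ∀ j ≠ k, s ≤ σ j) (ha : ∀ j, σ j ≤ a) {u : m → ℝ} {v x : n → ℝ}
    (hu : u ⬝ᵥ u = 1) (hv : v ⬝ᵥ v = 1) (hx : v ⬝ᵥ x = 0) :
    (s - a * (√(1 - (U.col (e k) ⬝ᵥ u) ^ 2) + √(1 - (V.col k ⬝ᵥ v) ^ 2)) ^ 2) * vnorm x ≤
      vnorm (deflator u *ᵥ (A *ᵥ x)) := by
  obtain ⟨j, hjk⟩ := exists_ne k
  exact mul_vnorm_le_vnorm_deflator_mulVec_of_singular_pair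
    (col_dotProduct_self h.transpose_mul_right k) hv
    (col_dotProduct_self h.transpose_mul_left (e k)) hu (h.nonneg k) hs₀ (ha k)
    ((hs j hjk).trans (ha j)) (h.mulVec_col k) (h.transpose_mulVec_col k)
    (fun _ hy => h.mul_vnorm_le_vnorm_mulVec hs₀ hs hy) hx

theorem mul_vnorm_le_vnorm_deflator_transpose_mulVec [Nontrivial n] (h : IsSVD A U e σ V)
    (hcard : Fintype.card m = Fintype.card n) {k : n} {s a : ℝ} (hs₀ : 0 ≤ s)
    (hs : ∀ j ≠ k, s ≤ σ j) (ha : ∀ j, σ j ≤ a) {u x : m → ℝ} {v : n → ℝ}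
    (hu : u ⬝ᵥ u = 1) (hv : v ⬝ᵥ v = 1) (hx : u ⬝ᵥ x = 0) :
    (s - a * (√(1 - (U.col (e k) ⬝ᵥ u) ^ 2) + √(1 - (V.col k ⬝ᵥ v) ^ 2)) ^ 2) * vnorm x ≤
      vnorm (deflator v *ᵥ (Aᵀ *ᵥ x)) := by
  obtain ⟨e, rfl⟩ : ∃ e' : n ≃ m, e'.toEmbedding = e :=
    ⟨.ofBijective e ((Fintype.bijective_iff_injective_and_card e).2 ⟨e.injective, hcard.symm⟩),
      rfl⟩
  have : Nontrivial m := e.symm.nontrivial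
  have hlow := h.transpose.mul_vnorm_le_vnorm_deflator_mulVec (k := e k) hs₀
    (fun j hj => hs _ fun hjk => hj (e.symm_apply_eq.1 hjk)) (fun j => ha _) hv hu hx
  simpa [add_comm] using hlow

end IsSVD

theorem isSVD_castLEEmb {M N : ℕ} (hMN : N ≤ M) {A S : Matrix (Fin M) (Fin N) ℝ}
    {U : Matrix (Fin M) (Fin M) ℝ} {V : Matrix (Fin N) (Fin N) ℝ} (hU : Uᵀ * U = 1)
    (hV : Vᵀ * V = 1) {σ : Fin N → ℝ} (hσ : ∀ i, 0 ≤ σ i)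
    (hS : ∀ i j, S i j = if (i : ℕ) = (j : ℕ) then σ j else 0) (hA : A = U * S * Vᵀ) :
    IsSVD A U (Fin.castLEEmb hMN) σ V := by
  have hS' : S = rectDiagonal (Fin.castLEEmb hMN) σ := by
    ext i j
    simp [rectDiagonal, hS, Fin.ext_iff]
  exact ⟨hU, hV, hσ, hS' ▸ hA⟩

end SingularValueDecomposition

section CorrectionEquation

variable {m n : Type*} [DecidableEq m] [DecidableEq n]

/-- The matrix `[[-τ I, A], [Aᵀ, -τ I]]`, whose eigenvalues away from `-τ` are `±σ - τ` for the
nonzero singular values `σ` of `A`. -/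
def shiftedAugmented (A : Matrix m n ℝ) (τ : ℝ) : Matrix (m ⊕ n) (m ⊕ n) ℝ :=
  fromBlocks ((-τ) • 1) A Aᵀ ((-τ) • 1)

/-- The projection `Π̃ = diag(I - u uᵀ, I - v vᵀ)` of the JDSVD correction equation. -/
def blockDeflator (u : m → ℝ) (v : n → ℝ) : Matrix (m ⊕ n) (m ⊕ n) ℝ :=
  fromBlocks (deflator u) 0 0 (deflator v)

theorem isSymm_shiftedAugmented (A : Matrix m n ℝ) (τ : ℝ) : (shiftedAugmented A τ).IsSymm :=
  (isSymm_one.smul _).fromBlocks rfl (isSymm_one.smul _)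

theorem isSymm_blockDeflator (u : m → ℝ) (v : n → ℝ) : (blockDeflator u v).IsSymm :=
  (isSymm_deflator u).fromBlocks transpose_zero (isSymm_deflator v)

variable [Fintype m] [Fintype n]

/-- The coefficient matrix `B̃₁ = Π̃ B Π̃` of the JDSVD correction equation with approximate
singular vectors `u` and `v`. -/
def correctionMatrix (A : Matrix m n ℝ) (τ : ℝ) (u : m → ℝ) (v : n → ℝ) :
    Matrix (m ⊕ n) (m ⊕ n) ℝ :=
  blockDeflator u v * shiftedAugmented A τ * blockDeflator u v

theorem isSymm_correctionMatrix (A : Matrix m n ℝ) (τ : ℝ) (u : m → ℝ) (v : n → ℝ) :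
    (correctionMatrix A τ u v).IsSymm := by
  rw [IsSymm, correctionMatrix, transpose_mul, transpose_mul, (isSymm_blockDeflator u v).eq,
    (isSymm_shiftedAugmented A τ).eq, Matrix.mul_assoc]

theorem blockDeflator_mul_self {u : m → ℝ} {v : n → ℝ} (hu : u ⬝ᵥ u = 1) (hv : v ⬝ᵥ v = 1) :
    blockDeflator u v * blockDeflator u v = blockDeflator u v := by
  simp [blockDeflator, fromBlocks_multiply, deflator_mul_self hu, deflator_mul_self hv]

theorem commute_blockDeflator_correctionMatrix (A : Matrix m n ℝ) (τ : ℝ) {u : m → ℝ} {v : n → ℝ}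
    (hu : u ⬝ᵥ u = 1) (hv : v ⬝ᵥ v = 1) :
    Commute (blockDeflator u v) (correctionMatrix A τ u v) := by
  have hidem := blockDeflator_mul_self hu hv
  calc blockDeflator u v * correctionMatrix A τ u v
      = correctionMatrix A τ u v := by
        rw [correctionMatrix, ← Matrix.mul_assoc, ← Matrix.mul_assoc, hidem]
    _ = correctionMatrix A τ u v * blockDeflator u v := by
        rw [correctionMatrix, Matrix.mul_assoc _ (blockDeflator u v), hidem]

theorem blockDeflator_mulVec_elim (u f : m → ℝ) (v g : n → ℝ) :
    blockDeflator u v *ᵥ Sum.elim f g = Sum.elim (deflator u *ᵥ f) (deflator v *ᵥ g) := by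
  simp [blockDeflator, fromBlocks_mulVec]

theorem shiftedAugmented_mulVec_elim (A : Matrix m n ℝ) (τ : ℝ) (f : m → ℝ) (g : n → ℝ) :
    shiftedAugmented A τ *ᵥ Sum.elim f g = Sum.elim (A *ᵥ g - τ • f) (Aᵀ *ᵥ f - τ • g) := by
  simp [shiftedAugmented, fromBlocks_mulVec, neg_mulVec, smul_mulVec, sub_eq_add_neg, add_comm]

theorem deflator_mulVec_eq_smul_of_eigenvector {A : Matrix m n ℝ} {τ μ : ℝ} {u f : m → ℝ}
    {v g : n → ℝ} (hf : deflator u *ᵥ f = f) (hg : deflator v *ᵥ g = g)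
    (heigen : correctionMatrix A τ u v *ᵥ Sum.elim f g = μ • Sum.elim f g) :
    deflator u *ᵥ (A *ᵥ g) = (μ + τ) • f ∧ deflator v *ᵥ (Aᵀ *ᵥ f) = (μ + τ) • g := by
  have hsmul : μ • Sum.elim f g = Sum.elim (μ • f) (μ • g) := Sum.comp_elim (μ • ·) f g
  rw [correctionMatrix, ← mulVec_mulVec, ← mulVec_mulVec, blockDeflator_mulVec_elim, hf, hg,
    shiftedAugmented_mulVec_elim, blockDeflator_mulVec_elim, mulVec_sub, mulVec_sub, mulVec_smul,
    mulVec_smul, hf, hg, hsmul, Sum.elim_eq_iff] at heigen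
  exact ⟨by rw [add_smul, ← heigen.1, sub_add_cancel],
    by rw [add_smul, ← heigen.2, sub_add_cancel]⟩

theorem vnorm_deflator_mulVec_eq_abs_mul {A : Matrix m n ℝ} {c : ℝ} {u f : m → ℝ} {v g : n → ℝ}
    (hf : deflator u *ᵥ f = f) (hg : deflator v *ᵥ g = g)
    (hAg : deflator u *ᵥ (A *ᵥ g) = c • f) (hAf : deflator v *ᵥ (Aᵀ *ᵥ f) = c • g) :
    vnorm (deflator u *ᵥ (A *ᵥ g)) = |c| * vnorm g := by
  have hadjoint : f ⬝ᵥ (deflator u *ᵥ (A *ᵥ g)) = g ⬝ᵥ (deflator v *ᵥ (Aᵀ *ᵥ f)) := by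
    rw [← (isSymm_deflator u).eq, ← (isSymm_deflator v).eq, dotProduct_transpose_mulVec,
      dotProduct_transpose_mulVec, hf, hg, dotProduct_comm, dotProduct_comm _ g,
      dotProduct_transpose_mulVec, dotProduct_comm]
  rw [hAg, ← vnorm_smul]
  apply vnorm_eq_of_dotProduct_self_eq
  rw [hAg, hAf, dotProduct_smul, dotProduct_smul] at hadjoint
  simp only [smul_dotProduct, dotProduct_smul, hadjoint]

theorem IsSVD.abs_add_mem_Icc_or_eq_neg [Nontrivial n] {A : Matrix m n ℝ} {U : Matrix m m ℝ}
    {e : n ↪ m} {σ : n → ℝ} {V : Matrix n n ℝ} (h : IsSVD A U e σ V) {k : n} {s a b : ℝ}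
    (hs₀ : 0 ≤ s) (hs : ∀ j ≠ k, s ≤ σ j) (ha : ∀ j, σ j ≤ a) (hb : ∀ j, σ j ≤ b) {u : m → ℝ}
    {v : n → ℝ} (hu : u ⬝ᵥ u = 1) (hv : v ⬝ᵥ v = 1) {δ : ℝ}
    (hδ : δ = a * (√(1 - (U.col (e k) ⬝ᵥ u) ^ 2) + √(1 - (V.col k ⬝ᵥ v) ^ 2)) ^ 2) (hδs : δ < s)
    {τ μ : ℝ} {x : m ⊕ n → ℝ} (hx₀ : x ≠ 0) (hx : blockDeflator u v *ᵥ x = x)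
    (heigen : correctionMatrix A τ u v *ᵥ x = μ • x) :
    |μ + τ| ∈ Set.Icc (s - δ) b ∨ Fintype.card m ≠ Fintype.card n ∧ μ = -τ := by
  obtain ⟨f, g, rfl⟩ : ∃ f g, x = Sum.elim f g := ⟨_, _, (Sum.elim_comp_inl_inr x).symm⟩
  obtain ⟨hf, hg⟩ := Sum.elim_eq_iff.1 ((blockDeflator_mulVec_elim u f v g).symm.trans hx)
  obtain ⟨hAg, hAf⟩ := deflator_mulVec_eq_smul_of_eigenvector hf hg heigen
  subst hδ
  rcases eq_or_ne g 0 with rfl | hg₀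
  · right
    have hf₀ : f ≠ 0 := fun hf₀ => hx₀ (by simp [hf₀])
    have hμ : μ + τ = 0 := (smul_eq_zero.1 (by simpa using hAg.symm)).resolve_right hf₀
    refine ⟨fun hcard => ?_, eq_neg_of_add_eq_zero_left hμ⟩
    have hlow := h.mul_vnorm_le_vnorm_deflator_transpose_mulVec hcard hs₀ hs ha hu hv
      (dotProduct_eq_zero_of_deflator_mulVec_eq_self hu hf)
    rw [hAf, smul_zero, vnorm_zero] at hlow
    exact hlow.not_gt (mul_pos (sub_pos.2 hδs) (vnorm_pos hf₀))
  · left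
    have hlow := h.mul_vnorm_le_vnorm_deflator_mulVec hs₀ hs ha hu hv
      (dotProduct_eq_zero_of_deflator_mulVec_eq_self hv hg)
    have hupp := (vnorm_deflator_mulVec_le hu (A *ᵥ g)).trans
      (h.vnorm_mulVec_le hb ((h.nonneg k).trans (hb k)) g)
    rw [vnorm_deflator_mulVec_eq_abs_mul hf hg hAg hAf] at hlow hupp
    exact ⟨le_of_mul_le_mul_right hlow (vnorm_pos hg₀), le_of_mul_le_mul_right hupp (vnorm_pos hg₀)⟩

theorem minres_bound_approx_smallest_general [Nontrivial n] {A : Matrix m n ℝ} {U : Matrix m m ℝ}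
    {e : n ↪ m} {σ : n → ℝ} {V : Matrix n n ℝ} (h : IsSVD A U e σ V) {k : n} {s b : ℝ}
    (hs : ∀ j ≠ k, s ≤ σ j) (hb : ∀ j, σ j ≤ b) {u : m → ℝ} {v : n → ℝ} (hu : u ⬝ᵥ u = 1)
    (hv : v ⬝ᵥ v = 1) {δ : ℝ}
    (hδ : δ = specNorm A *
      (√(1 - (U.col (e k) ⬝ᵥ u) ^ 2) + √(1 - (V.col k ⬝ᵥ v) ^ 2)) ^ 2)
    {τ : ℝ} (hτ : 0 < τ) (hδs : δ < s - τ) {r : m ⊕ n → ℝ} (hr : blockDeflator u v *ᵥ r = r)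
    {d : ℕ} (hd : d = min 1 (Fintype.card m - Fintype.card n)) {j : ℕ} (hj : d ≤ j) :
    ∃ w ∈ Krylov (correctionMatrix A τ u v) r j,
      vnorm (correctionMatrix A τ u v *ᵥ w + r) ≤
        2 * (b / τ) ^ d * chebyshevRate ((b ^ 2 - τ ^ 2) / ((s - δ) ^ 2 - τ ^ 2)) ^ ((j - d) / 2) *
          vnorm r := by
  obtain ⟨i, hik⟩ := exists_ne k
  have hδ₀ : 0 ≤ δ := hδ ▸ mul_nonneg (norm_nonneg _) (sq_nonneg _)
  have hab : s - δ ≤ b := by linarith [hs i hik, hb i]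
  obtain ⟨p, hp_deg, hp_zero, hp_le, hp_neg⟩ :=
    exists_polynomial_abs_eval_le_and_eval_neg_eq_zero hτ (by linarith) hab d ((j - d) / 2)
  have hbound := (abs_nonneg _).trans <| hp_le (s - δ - τ) <| by
    rw [sub_add_cancel, abs_of_pos (by linarith)]
    exact ⟨le_rfl, hab⟩
  refine exists_mem_Krylov_vnorm_mulVec_add_le (isSymm_correctionMatrix A τ u v)
    (isSymm_blockDeflator u v) (blockDeflator_mul_self hu hv)
    (commute_blockDeflator_correctionMatrix A τ hu hv) hr (hp_deg.trans (by omega)) hp_zero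
    hbound fun μ x hx₀ hx heigen => ?_
  rcases h.abs_add_mem_Icc_or_eq_neg (by linarith) hs h.le_specNorm hb hu hv hδ (by linarith)
    hx₀ hx heigen with hmem | ⟨hcard, rfl⟩
  · exact hp_le μ hmem
  · have hle := Fintype.card_le_of_embedding e
    rw [hp_neg (by omega), abs_zero]
    exact hbound

end CorrectionEquation

/-- Theorem 3.5(ii). MINRES bound for the JDSVD correction equation with
approximate singular vectors, in the case `σ₁ = σ_min`. -/
theorem minres_bound_approx_smallest {M N : ℕ} (hN : 2 ≤ N) (hMN : N ≤ M)
    (A : Matrix (Fin M) (Fin N) ℝ)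
    (U : Matrix (Fin M) (Fin M) ℝ) (V : Matrix (Fin N) (Fin N) ℝ)
    (hU : Uᵀ * U = 1) (hV : Vᵀ * V = 1)
    (σ : Fin N → ℝ) (hσ : ∀ i, 0 ≤ σ i)
    (S : Matrix (Fin M) (Fin N) ℝ)
    (hS : ∀ i j, S i j = if (i : ℕ) = (j : ℕ) then σ j else 0)
    (hA : A = U * S * Vᵀ)
    (τ : ℝ) (hτ0 : 0 < τ)
    (hclosest : ∀ i : Fin N, i ≠ ⟨0, by omega⟩ → |σ ⟨0, by omega⟩ - τ| < |σ i - τ|)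
    (σmax σmin σmin2 : ℝ)
    (hσmax : IsGreatest (Set.range σ) σmax)
    (hσmin : IsLeast (Set.range σ) σmin)
    (hσmin2 : IsLeast (σ '' {i : Fin N | i ≠ ⟨0, by omega⟩}) σmin2)
    (hτ1 : σmin ≤ τ) (hτ2 : τ < (σmin + σmin2) / 2)
    (u1 : Fin M → ℝ) (hu1 : u1 = fun i => U i ⟨0, by omega⟩)
    (v1 : Fin N → ℝ) (hv1 : v1 = fun i => V i ⟨0, by omega⟩)
    (u1t : Fin M → ℝ) (hu1t : ∑ i, u1t i ^ 2 = 1)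
    (v1t : Fin N → ℝ) (hv1t : ∑ i, v1t i ^ 2 = 1)
    (δ : ℝ)
    (hδ : δ = specNorm A *
      (Real.sqrt (1 - (u1 ⬝ᵥ u1t) ^ 2) + Real.sqrt (1 - (v1 ⬝ᵥ v1t) ^ 2)) ^ 2)
    (hδsmall : δ < σmin2 - τ)
    (B P B1 : Matrix (Fin M ⊕ Fin N) (Fin M ⊕ Fin N) ℝ)
    (hB : B = Matrix.fromBlocks ((-τ) • 1) A Aᵀ ((-τ) • 1))
    (hP : P = Matrix.fromBlocks (1 - vecMulVec u1t u1t) 0 0 (1 - vecMulVec v1t v1t))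
    (hB1 : B1 = P * B * P)
    (r : Fin M ⊕ Fin N → ℝ) (hr : P *ᵥ r = r) :
    ∀ j : ℕ, min 1 (M - N) ≤ j → ∃ w ∈ Krylov B1 r j,
      vnorm (B1 *ᵥ w + r) ≤
        2 * ((σmax + δ) / τ) ^ (min 1 (M - N)) *
          (1 - 2 / (1 + Real.sqrt (((σmax + δ) ^ 2 - τ ^ 2) / ((σmin2 - δ) ^ 2 - τ ^ 2)))) ^
            ((j - min 1 (M - N)) / 2) * vnorm r := by
  subst hu1 hv1 hB hP hB1
  have : Nontrivial (Fin N) := Fin.nontrivial_iff_two_le.2 hN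
  have hδ₀ : 0 ≤ δ := hδ ▸ mul_nonneg (norm_nonneg _) (sq_nonneg _)
  exact fun j hj => minres_bound_approx_smallest_general (isSVD_castLEEmb hMN hU hV hσ hS hA)
    (fun i hi => hσmin2.2 ⟨i, hi, rfl⟩)
    (fun i => (hσmax.2 ⟨i, rfl⟩).trans (le_add_of_nonneg_right hδ₀))
    (by simpa only [dotProduct, sq] using hu1t) (by simpa only [dotProduct, sq] using hv1t)
    hδ hτ0 hδsmall hr (by rw [Fintype.card_fin, Fintype.card_fin]) hj
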